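/- Let I = ⟨[n],[m],{v_i}⟩ be a fair division instance in which every item is a good, a chore, or a nonnegatively-valued item, and let Ī = ⟨[n],{1,…,m+1},{v̄_i}⟩ be a perturbed instance satisfying: v̄_i(m+1) = λ/2 for all i; for j ≤ m, v_i(j) − ε ≤ v̄_i(j) ≤ v_i(j) with v̄_i(j) = 0 exactly when v_i(j) = 0, where λ > 0 lower-bounds all positive differences v_i(S) − v_i(T) and 0 < ε < min{λ, nω}/(2m) with ω > 0 lower-bounding all positive social-welfare differences between allocations of I; additionally Ī is non-degenerate: for every simple cycle (j_1,i_1,…,j_k,i_k,j_1) in the complete bipartite graph between agents and items of Ī whose edge values v̄_{i_ℓ}(j_ℓ), v̄_{i_ℓ}(j_{ℓ+1}) are all nonzero, the product ∏_{ℓ=1}^k v̄_{i_ℓ}(j_ℓ)/v̄_{i_ℓ}(j_{ℓ+1}) ≠ 1. Let η = λ/(2 m n V) with V = max_{i,j}|v̄_i(j)|. Then there exist w* ∈ Δ_{n−1} and an allocation A of {1,…,m+1} maximizing Σ_i (w*_i + η) v̄_i(A_i) over all allocations such that A is IEF1 for the instance Ī. -/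

import Mathlib

open Finset

/-- Value of a bundle under an additive valuation. -/
def bval {α : Type*} (u : α → ℝ) (S : Finset α) : ℝ := ∑ j ∈ S, u j

/-- An allocation: every item belongs to exactly one agent's bundle. -/
def IsAlloc {n : ℕ} {I : Type*} (A : Fin n → Finset I) : Prop :=
  ∀ j : I, ∃! i : Fin n, j ∈ A i

/-- IEF1 with respect to valuations `u`. -/
def IEF1 {n : ℕ} {I : Type*} [DecidableEq I] (u : Fin n → I → ℝ)
    (A : Fin n → Finset I) : Prop :=
  ∀ i : Fin n, ∃ S : Finset I, S.card ≤ 1 ∧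
    ∀ j : Fin n, bval (u i) (A j) ≤ bval (u i) (symmDiff (A i) S)


section Scarf
variable {N X : Type*} [Fintype N] [DecidableEq N] [Fintype X] [DecidableEq X]

def SDom (r : N → X → ℕ) (ρ : Finset X) : Prop := ∀ v, ∃ i, ∀ s ∈ ρ, r i v ≤ r i s

/-- characterisation of rooms above a door -/
lemma door_two (r : N → X → ℕ) (hr : ∀ i, Function.Injective (r i))
    (τ : Finset X) (hτ : τ.Nonempty) (hcard : τ.card + 1 = Fintype.card N) (hdom : SDom r τ)
    (hne : ∀ i, ∃ e, ∀ l, l ≠ i → ∃ s ∈ τ, r l s < r l e) :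
    ∃ a b, a ∉ τ ∧ b ∉ τ ∧ a ≠ b ∧ ∀ v, v ∉ τ → (SDom r (insert v τ) ↔ v = a ∨ v = b) := by
  classical
  have hμ : ∀ i, ∃ x ∈ τ, ∀ s ∈ τ, r i x ≤ r i s := fun i => Finset.exists_min_image τ (r i) hτ
  choose μ hμτ hμ using hμ
  have hsurj : ∀ s ∈ τ, ∃ i, μ i = s := by
    intro s hs
    obtain ⟨i, hi⟩ := hdom s
    exact ⟨i, hr i (le_antisymm (hμ i s hs) (hi _ (hμτ i)))⟩
  obtain ⟨i, -, j, -, hij, hμij⟩ : ∃ x ∈ (univ : Finset N), ∃ y ∈ (univ : Finset N), x ≠ y ∧ μ x = μ y := by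
    apply Finset.exists_ne_map_eq_of_card_lt_of_maps_to (t := τ)
    · rw [Finset.card_univ]; omega
    · intro x _; exact hμτ x
  -- injectivity from surjectivity on erase
  have hinj : ∀ k, (∀ s ∈ τ, ∃ l, l ≠ k ∧ μ l = s) → ∀ l l', l ≠ k → l' ≠ k → μ l = μ l' → l = l' := by
    intro k hk l l' hl hl' h
    have := Finset.injOn_of_surjOn_of_card_le (s := univ.erase k) (t := τ) μ
      (fun x _ => hμτ x) (by
        intro s hs
        obtain ⟨l, hl, rfl⟩ := hk s hs
        exact ⟨l, by simp [hl], rfl⟩) (by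
        rw [Finset.card_erase_of_mem (mem_univ _), Finset.card_univ]; omega)
    exact this (by simp [hl]) (by simp [hl']) h
  let M : N → Finset X := fun k => univ.filter (fun u => ∀ l, l ≠ k → r l (μ l) < r l u)
  have hMne : ∀ k, (M k).Nonempty := by
    intro k
    obtain ⟨e, he⟩ := hne k
    refine ⟨e, by
      simp only [M, mem_filter, mem_univ, true_and]
      intro l hl
      obtain ⟨s, hs, h⟩ := he l hl
      exact lt_of_le_of_lt (hμ l s hs) h⟩
  have hMmax : ∀ k, ∃ x ∈ M k, ∀ u ∈ M k, r k u ≤ r k x := fun k =>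
    Finset.exists_max_image (M k) (r k) (hMne k)
  choose z hzM hz using hMmax
  have hzM' : ∀ k l, l ≠ k → r l (μ l) < r l (z k) := by
    intro k; have := hzM k; simpa [M] using this
  have hznot : ∀ k k', k ≠ k' → μ k = μ k' → z k ∉ τ := by
    intro k k' hk hkk' hmem
    obtain ⟨l, hl⟩ := hsurj _ hmem
    by_cases h : l = k
    · subst h
      have := hzM' l k' (Ne.symm hk)
      rw [← hl, ← hkk'] at this
      exact lt_irrefl _ this
    · have := hzM' k l h
      rw [← hl] at this; exact lt_irrefl _ this
  have hback : ∀ k, SDom r (insert (z k) τ) := by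
    intro k u
    by_cases hu : u ∈ M k
    · refine ⟨k, ?_⟩
      obtain ⟨l, hl⟩ := hdom (z k)
      have hlk : l = k := by
        by_contra h
        exact absurd (hl _ (hμτ l)) (not_le.mpr (hzM' k l h))
      subst hlk
      intro s hs
      rcases Finset.mem_insert.mp hs with rfl | hs
      · exact hz _ u hu
      · exact (hz _ u hu).trans (hl s hs)
    · simp only [M, mem_filter, mem_univ, true_and, not_forall, not_lt] at hu
      obtain ⟨l, hlk, hl⟩ := hu
      refine ⟨l, ?_⟩
      intro s hs
      rcases Finset.mem_insert.mp hs with rfl | hs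
      · exact hl.trans (hzM' k l hlk).le
      · exact hl.trans (hμ l s hs)
  refine ⟨z i, z j, hznot i j hij hμij, hznot j i hij.symm hμij.symm, ?_, ?_⟩
  · intro h
    obtain ⟨l, hl⟩ := hdom (z i)
    have := hl _ (hμτ l)
    by_cases hli : l = i
    · have h2 := hzM' j l (by rw [hli]; exact hij)
      rw [← h] at h2; omega
    · have h2 := hzM' i l hli
      omega
  · intro v hv
    constructor
    · intro hd
      obtain ⟨k, hk⟩ := hd v
      have hs : ∀ s ∈ τ, ∃ l, l ≠ k ∧ μ l = s ∧ r l s ≤ r l v := by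
        intro s hs
        obtain ⟨l, hl⟩ := hd s
        refine ⟨l, ?_, ?_, hl v (mem_insert_self _ _)⟩
        · rintro rfl
          have h1 := hl v (mem_insert_self _ _)
          have h2 := hk s (mem_insert_of_mem hs)
          have := hr l (le_antisymm h1 h2)
          exact hv (this ▸ hs)
        · exact hr l (le_antisymm (hμ l s hs) (hl _ (mem_insert_of_mem (hμτ l))))
      have hI := hinj k (fun s h => by obtain ⟨l, h1, h2, _⟩ := hs s h; exact ⟨l, h1, h2⟩)
      have hvM : v ∈ M k := by
        simp only [M, mem_filter, mem_univ, true_and]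
        intro l hl
        obtain ⟨l', h1, h2, h3⟩ := hs (μ l) (hμτ l)
        have := hI _ _ h1 hl h2
        subst this
        refine lt_of_le_of_ne h3 ?_
        intro h
        exact hv (hr _ h ▸ hμτ _)
      have hmax : ∀ u ∈ M k, r k u ≤ r k v := by
        intro u hu
        simp only [M, mem_filter, mem_univ, true_and] at hu
        obtain ⟨l, hl⟩ := hd u
        by_cases hlk : l = k
        · subst hlk; exact hl v (mem_insert_self _ _)
        · exact absurd (hl _ (mem_insert_of_mem (hμτ l))) (not_le.mpr (hu l hlk))
      have hvz : v = z k := hr k (le_antisymm (hz k v hvM) (hmax _ (hzM k)))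
      by_cases h1 : i = k
      · left; rw [hvz, h1]
      · by_cases h2 : j = k
        · right; rw [hvz, h2]
        · exact absurd (hI _ _ h1 h2 hμij) hij
    · rintro (rfl | rfl) <;> exact hback _

theorem scarf (r : N → X → ℕ) (hr : ∀ i, Function.Injective (r i)) (c : X → N)
    (e : N → X) (hc : ∀ i, c (e i) = i) (hmin : ∀ i v, r i (e i) ≤ r i v)
    (hmax : ∀ i l v, l ≠ i → v ∉ Set.range e → r l v < r l (e i))
    (hX : ∃ v, v ∉ Set.range e) (i0 : N) :
    ∃ ρ : Finset X, SDom r ρ ∧ ρ.image c = univ := by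
  classical
  by_contra hcon
  push Not at hcon
  let R : Finset (Finset X) := univ.filter fun ρ => ρ.card = Fintype.card N ∧ SDom r ρ
  let T : Finset (Finset X) := univ.filter fun τ => τ.card + 1 = Fintype.card N ∧
    τ.image c = univ.erase i0 ∧ SDom r τ
  have hR : ∀ ρ, ρ ∈ R ↔ ρ.card = Fintype.card N ∧ SDom r ρ := by simp [R]
  have hT : ∀ τ, τ ∈ T ↔ τ.card + 1 = Fintype.card N ∧
    τ.image c = univ.erase i0 ∧ SDom r τ := by simp [T]
  have key := Finset.sum_card_bipartiteAbove_eq_sum_card_bipartiteBelow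
    (s := R) (t := T) (fun ρ τ => τ ⊆ ρ)
  have hsub : ∀ (ρ τ : Finset X), SDom r ρ → τ ⊆ ρ → SDom r τ := by
    intro ρ τ h hs v
    obtain ⟨i, hi⟩ := h v
    exact ⟨i, fun s h => hi s (hs h)⟩
  have hext : ∀ (ρ τ : Finset X), ρ.card = Fintype.card N → τ.card + 1 = Fintype.card N → τ ⊆ ρ →
      ∃ x, x ∉ τ ∧ insert x τ = ρ := by
    intro ρ τ h1 h2 h3
    have h4 : (ρ \ τ).card = 1 := by rw [Finset.card_sdiff_of_subset h3]; omega
    obtain ⟨x, hx⟩ := Finset.card_eq_one.mp h4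
    have hx' : x ∈ ρ \ τ := by rw [hx]; simp
    refine ⟨x, (mem_sdiff.mp hx').2, ?_⟩
    apply Finset.eq_of_subset_of_card_le
    · intro y hy
      rcases mem_insert.mp hy with rfl | hy
      · exact (mem_sdiff.mp hx').1
      · exact h3 hy
    · rw [Finset.card_insert_of_notMem (mem_sdiff.mp hx').2]; omega
  -- rooms have an even number of doors
  have hrooms : ∀ ρ ∈ R, Even (#(Finset.bipartiteAbove (fun ρ τ => τ ⊆ ρ) T ρ)) := by
    intro ρ hρ
    obtain ⟨hρc, hρd⟩ := (hR ρ).mp hρ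
    by_cases hE : (Finset.bipartiteAbove (fun ρ τ => τ ⊆ ρ) T ρ) = ∅
    · rw [hE]; simp
    · obtain ⟨τ, hτ⟩ := Finset.nonempty_iff_ne_empty.mpr hE
      rw [Finset.mem_bipartiteAbove] at hτ
      obtain ⟨hτT, hτρ⟩ := hτ
      obtain ⟨hτc, hτi, hτd⟩ := (hT τ).mp hτT
      obtain ⟨x, hxτ, hins⟩ := hext ρ τ hρc hτc hτρ
      have hcx : c x ≠ i0 := by
        intro h
        apply hcon ρ hρd
        rw [← hins, Finset.image_insert, hτi, h, Finset.insert_erase (mem_univ _)]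
      have : c x ∈ τ.image c := by rw [hτi]; simp [hcx]
      obtain ⟨y, hyτ, hyx⟩ := Finset.mem_image.mp this
      have hxy : x ≠ y := by rintro rfl; exact hxτ hyτ
      have hT' : ∀ τ', τ' ∈ T → Set.InjOn c τ' := by
        intro τ' h
        obtain ⟨h1, h2, h3⟩ := (hT τ').mp h
        apply Finset.card_image_iff.mp
        rw [h2, Finset.card_erase_of_mem (mem_univ _), Finset.card_univ]; omega
      have h2 : (Finset.bipartiteAbove (fun ρ τ => τ ⊆ ρ) T ρ) = {ρ.erase x, ρ.erase y} := by
        have hxρ : x ∈ ρ := by rw [← hins]; simp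
        have hyρ : y ∈ ρ := hτρ hyτ
        have e1 : ρ.erase x = τ := by rw [← hins, Finset.erase_insert hxτ]
        ext τ'
        rw [Finset.mem_bipartiteAbove, mem_insert, mem_singleton]
        constructor
        · rintro ⟨h1, h2⟩
          obtain ⟨z, hz, hz'⟩ := hext ρ τ' hρc ((hT τ').mp h1).1 h2
          have e2 : τ' = ρ.erase z := by rw [← hz', Finset.erase_insert hz]
          by_cases hzx : z = x
          · left; rw [e2, hzx]
          by_cases hzy : z = y
          · right; rw [e2, hzy]
          exfalso
          apply hxy
          apply hT' τ' h1 _ _ hyx.symm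
          · rw [e2]; simp [hxρ, Ne.symm hzx]
          · rw [e2]; simp [hyρ, Ne.symm hzy]
        · rintro (rfl | rfl)
          · rw [e1]; exact ⟨hτT, hτρ⟩
          · refine ⟨(hT _).mpr ⟨?_, ?_, ?_⟩, Finset.erase_subset _ _⟩
            · rw [Finset.card_erase_of_mem hyρ, hρc]; omega
            · rw [← hτi]
              ext a
              simp only [mem_image, mem_erase]
              constructor
              · rintro ⟨b, ⟨hb1, hb2⟩, rfl⟩
                rw [← hins, mem_insert] at hb2
                rcases hb2 with rfl | hb2
                · exact ⟨y, hyτ, hyx⟩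
                · exact ⟨b, hb2, rfl⟩
              · rintro ⟨b, hb, rfl⟩
                by_cases hby : b = y
                · exact ⟨x, ⟨hxy, hxρ⟩, by rw [hby, hyx]⟩
                · exact ⟨b, ⟨hby, hτρ hb⟩, rfl⟩
            · exact hsub _ _ hρd (Finset.erase_subset _ _)
      rw [h2, Finset.card_pair]
      · exact even_two
      · intro h
        have : y ∈ ρ.erase x := by simp [hxy.symm, hτρ hyτ]
        rw [h] at this; simp at this
  have heinj : Function.Injective e := fun a b h => by rw [← hc a, ← hc b, h]
  let τ0 : Finset X := (univ.erase i0).image e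
  have hτ0T : τ0 ∈ T := by
    rw [hT]
    refine ⟨?_, ?_, ?_⟩
    · rw [Finset.card_image_of_injective _ heinj, Finset.card_erase_of_mem (mem_univ _), Finset.card_univ]
      have : 0 < Fintype.card N := Fintype.card_pos_iff.mpr ⟨i0⟩
      omega
    · rw [Finset.image_image]
      have : c ∘ e = id := funext hc
      rw [this, Finset.image_id]
    · intro v
      by_cases hv : v ∈ Set.range e
      · obtain ⟨k, rfl⟩ := hv
        exact ⟨k, fun s _ => hmin k s⟩
      · refine ⟨i0, ?_⟩
        intro s hs
        obtain ⟨k, hk, rfl⟩ := Finset.mem_image.mp hs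
        exact (hmax k i0 v (by simpa using (Finset.mem_erase.mp hk).1.symm) hv).le
  have hτ0 : #(Finset.bipartiteBelow (fun ρ τ => τ ⊆ ρ) R τ0) = 1 := by
    obtain ⟨v1, hv1⟩ := hX
    obtain ⟨b, hb, hbmax⟩ := Finset.exists_max_image (univ.filter fun v => v ∉ Set.range e) (r i0)
      ⟨v1, by simpa using hv1⟩
    have hb : b ∉ Set.range e := by simpa using hb
    have hbmax : ∀ u, u ∉ Set.range e → r i0 u ≤ r i0 b := fun u hu => hbmax u (by simpa using hu)
    have hbτ : b ∉ τ0 := by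
      intro h
      obtain ⟨k, hk, rfl⟩ := Finset.mem_image.mp h
      exact hb ⟨k, rfl⟩
    rw [Finset.card_eq_one]
    refine ⟨insert b τ0, ?_⟩
    ext ρ
    rw [Finset.mem_bipartiteBelow, mem_singleton, hR]
    constructor
    · rintro ⟨⟨h1, h2⟩, h3⟩
      obtain ⟨x, hx, rfl⟩ := hext ρ τ0 h1 ((hT τ0).mp hτ0T).1 h3
      have hbx : ∀ u, u ∉ Set.range e → r i0 u ≤ r i0 x := by
        intro u hu
        obtain ⟨l, hl⟩ := h2 u
        by_cases hli : l = i0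
        · rw [hli] at hl; exact hl x (mem_insert_self _ _)
        · exfalso
          have := hl (e l) (mem_insert_of_mem (Finset.mem_image_of_mem _ (by simp [hli])))
          exact hu ⟨l, hr l (le_antisymm (hmin l u) this)⟩
      have hxr : x ∉ Set.range e := by
        rintro ⟨k, rfl⟩
        have hk : k = i0 := by
          by_contra h
          exact hx (Finset.mem_image_of_mem _ (by simp [h]))
        rw [hk] at hbx
        exact hb ⟨i0, hr i0 (le_antisymm (hmin i0 b) (hbx b hb))⟩
      rw [hr i0 (le_antisymm (hbmax x hxr) (hbx b hb))]
    · rintro rfl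
      refine ⟨⟨?_, ?_⟩, Finset.subset_insert _ _⟩
      · rw [Finset.card_insert_of_notMem hbτ]; exact ((hT τ0).mp hτ0T).1
      · intro v
        by_cases hv : v ∈ Set.range e
        · obtain ⟨k, rfl⟩ := hv
          exact ⟨k, fun s _ => hmin k s⟩
        · refine ⟨i0, ?_⟩
          intro s hs
          rcases mem_insert.mp hs with rfl | hs
          · exact hbmax v hv
          · obtain ⟨k, hk, rfl⟩ := Finset.mem_image.mp hs
            exact (hmax k i0 v (by simpa using (Finset.mem_erase.mp hk).1.symm) hv).le
  have hdoors : ∀ τ ∈ T.erase τ0, Even (#(Finset.bipartiteBelow (fun ρ τ => τ ⊆ ρ) R τ)) := by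
    intro τ hτ
    obtain ⟨hne, hτT⟩ := Finset.mem_erase.mp hτ
    obtain ⟨hτc, hτi, hτd⟩ := (hT τ).mp hτT
    obtain ⟨s, hsτ, hs⟩ : ∃ s ∈ τ, s ∉ Set.range e := by
      by_contra h
      push Not at h
      apply hne
      ext y
      constructor
      · intro hy
        obtain ⟨k, rfl⟩ := h y hy
        apply Finset.mem_image_of_mem
        rw [← hτi, ← hc k]
        rw [hc k]
        exact Finset.mem_image.mpr ⟨e k, hy, hc k⟩
      · intro hy
        obtain ⟨k, hk, rfl⟩ := Finset.mem_image.mp hy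
        rw [← hτi] at hk
        obtain ⟨y, hy, hyk⟩ := Finset.mem_image.mp hk
        obtain ⟨k', rfl⟩ := h y hy
        rw [hc] at hyk
        rw [← hyk]; exact hy
    obtain ⟨a, b, ha, hb, hab, H⟩ := door_two r hr τ ⟨s, hsτ⟩ hτc hτd
      (fun i => ⟨e i, fun l hl => ⟨s, hsτ, hmax i l s hl hs⟩⟩)
    have : Finset.bipartiteBelow (fun ρ τ => τ ⊆ ρ) R τ = {insert a τ, insert b τ} := by
      ext ρ
      rw [Finset.mem_bipartiteBelow, mem_insert, mem_singleton, hR]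
      constructor
      · rintro ⟨⟨h1, h2⟩, h3⟩
        obtain ⟨x, hx, rfl⟩ := hext ρ τ h1 hτc h3
        rcases (H x hx).mp h2 with rfl | rfl
        · left; rfl
        · right; rfl
      · rintro (rfl | rfl)
        · exact ⟨⟨by rw [Finset.card_insert_of_notMem ha]; exact hτc, (H a ha).mpr (Or.inl rfl)⟩,
            Finset.subset_insert _ _⟩
        · exact ⟨⟨by rw [Finset.card_insert_of_notMem hb]; exact hτc, (H b hb).mpr (Or.inr rfl)⟩,
            Finset.subset_insert _ _⟩
    rw [this, Finset.card_pair]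
    · exact even_two
    · intro h
      have : a ∈ insert b τ := by rw [← h]; simp
      rcases mem_insert.mp this with h | h
      · exact hab h
      · exact ha h
  have hL := Finset.even_sum _ hrooms
  rw [key, ← Finset.add_sum_erase _ _ hτ0T, hτ0] at hL
  have hD := Finset.even_sum _ hdoors
  rw [Nat.even_add] at hL
  exact absurd (hL.mpr hD) (by decide)

end Scarf

lemma grid_lemma (n : ℕ) (hn : 0 < n) (K : ℕ) (lab : (Fin n → ℕ) → Fin n) :
    ∃ x : Fin n → ℕ, ∑ i, x i = K ∧ ∀ i, ∃ y : Fin n → ℕ, ∑ i, y i = K ∧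
      (∀ k, y k ≤ x k + n ∧ x k ≤ y k + n) ∧ (lab y = i ∨ y i ≤ n) := by
  classical
  let V := {f : Fin n → Fin (K+1) // ∑ i, (f i : ℕ) = K}
  have mkV : ∀ f : Fin n → ℕ, ∑ i, f i = K → ∃ v : V, ∀ i, (v.1 i : ℕ) = f i := by
    intro f hf
    have hle : ∀ i, f i < K + 1 := fun i => by
      have := Finset.single_le_sum (f := f) (fun _ _ => Nat.zero_le _) (mem_univ i)
      omega
    exact ⟨⟨fun i => ⟨f i, hle i⟩, by simpa using hf⟩, fun i => rfl⟩
  let B := Fintype.card V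
  let idx : V ≃ Fin B := Fintype.equivFin V
  let r : Fin n → V ⊕ Fin n → ℕ := fun i x => match x with
    | Sum.inl v => (v.1 i : ℕ) * B + (idx v : ℕ) + 1
    | Sum.inr k => if k = i then 0 else (K+1) * B + 1 + k
  have hltB : ∀ i (v : V), r i (Sum.inl v) < (K+1) * B + 1 := by
    intro i v
    have h1 : (v.1 i : ℕ) * B ≤ K * B := Nat.mul_le_mul_right _ (Nat.lt_succ_iff.mp (v.1 i).2)
    have h2 := (idx v).2
    have h3 : (K+1) * B = K * B + B := by ring
    show (v.1 i : ℕ) * B + (idx v : ℕ) + 1 < _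
    omega
  have hmono : ∀ i (v w : V), r i (Sum.inl v) ≤ r i (Sum.inl w) → (v.1 i : ℕ) ≤ w.1 i := by
    intro i v w h
    by_contra hlt
    push Not at hlt
    have h1 : ((w.1 i : ℕ) + 1) * B ≤ (v.1 i : ℕ) * B := Nat.mul_le_mul_right _ hlt
    have h2 := (idx w).2
    have h3 : ((w.1 i : ℕ) + 1) * B = (w.1 i : ℕ) * B + B := by ring
    have h4 : (v.1 i : ℕ) * B + (idx v : ℕ) + 1 ≤ (w.1 i : ℕ) * B + (idx w : ℕ) + 1 := h
    omega
  have hrr : ∀ i k, r i (Sum.inr k) = if k = i then 0 else (K+1) * B + 1 + k := fun _ _ => rfl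
  have hrl : ∀ i (v : V), r i (Sum.inl v) = (v.1 i : ℕ) * B + (idx v : ℕ) + 1 := fun _ _ => rfl
  let c : V ⊕ Fin n → Fin n := fun x => match x with
    | Sum.inl v => lab (fun i => (v.1 i : ℕ))
    | Sum.inr k => k
  let i0 : Fin n := ⟨0, hn⟩
  obtain ⟨v0, hv0⟩ := mkV (fun i => if i = i0 then K else 0) (by simp)
  have hinj : ∀ i, Function.Injective (r i) := by
    intro i x y hxy
    rcases x with v | k <;> rcases y with w | l
    · have h1 := hmono i v w hxy.le
      have h2 := hmono i w v hxy.ge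
      have h3 : (v.1 i : ℕ) = w.1 i := le_antisymm h1 h2
      rw [hrl, hrl, h3] at hxy
      have : idx v = idx w := Fin.ext (by omega)
      rw [idx.injective this]
    · have := hltB i v
      have h2 := hrl i v
      rw [hrr] at hxy
      split_ifs at hxy <;> omega
    · have := hltB i w
      have h2 := hrl i w
      rw [hrr] at hxy
      split_ifs at hxy <;> omega
    · rw [hrr, hrr] at hxy
      congr 1
      apply Fin.ext
      split_ifs at hxy with h1 h2 h2
      · rw [h1, h2]
      · omega
      · omega
      · omega
  obtain ⟨ρ, hdom, him⟩ := scarf r hinj c Sum.inr (fun i => rfl) (by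
      intro i v; rw [hrr]; simp) (by
      intro i l v hl hv
      rcases v with v | k
      · have := hltB l v
        rw [hrr, if_neg (Ne.symm hl)]; omega
      · exact absurd ⟨k, rfl⟩ hv) ⟨Sum.inl v0, by simp⟩ i0
  have hcol : ∀ i, Sum.inr i ∉ ρ → ∃ v : V, Sum.inl v ∈ ρ ∧ lab (fun i => (v.1 i : ℕ)) = i := by
    intro i hi
    have : i ∈ ρ.image c := by rw [him]; simp
    obtain ⟨x, hx, hxi⟩ := Finset.mem_image.mp this
    rcases x with v | k
    · exact ⟨v, hx, hxi⟩
    · have : k = i := hxi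
      exact absurd (this ▸ hx) hi
  have hdom' : ∀ v : V, ∃ i, Sum.inr i ∉ ρ ∧ ∀ s : V, Sum.inl s ∈ ρ → (v.1 i : ℕ) ≤ s.1 i := by
    intro v
    obtain ⟨i, hi⟩ := hdom (Sum.inl v)
    refine ⟨i, ?_, fun s hs => hmono i v s (hi _ hs)⟩
    intro h
    have := hi _ h
    rw [hrr, if_pos rfl, hrl] at this
    omega
  obtain ⟨i1, hi1, -⟩ := hdom' v0
  obtain ⟨s0, hs0, -⟩ := hcol i1 hi1
  have hmn : ∀ i, ∃ t : V, Sum.inl t ∈ ρ ∧ ∀ s : V, Sum.inl s ∈ ρ → (t.1 i : ℕ) ≤ s.1 i := by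
    intro i
    obtain ⟨t, ht, hmin⟩ := Finset.exists_min_image (univ.filter fun s : V => Sum.inl s ∈ ρ)
      (fun s => (s.1 i : ℕ)) ⟨s0, by simpa using hs0⟩
    exact ⟨t, by simpa using ht, fun s hs => hmin s (by simpa using hs)⟩
  choose t ht hmin using hmn
  let m : Fin n → ℕ := fun i => if Sum.inr i ∈ ρ then 0 else (t i).1 i
  have hm : ∀ (s : V), Sum.inl s ∈ ρ → ∀ i, m i ≤ s.1 i := by
    intro s hs i
    simp only [m]
    split_ifs
    · exact Nat.zero_le _
    · exact hmin i s hs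
  have hbig : K < ∑ i, m i + n := by
    by_contra hle
    push Not at hle
    let f : Fin n → ℕ := fun i => if Sum.inr i ∈ ρ then 0 else m i + 1
    have hf : ∑ i, f i ≤ K := by
      refine le_trans ?_ hle
      have : ∑ i, m i + n = ∑ i, (m i + 1) := by simp [Finset.sum_add_distrib]
      rw [this]
      apply Finset.sum_le_sum
      intro i _
      simp only [f]
      split_ifs <;> omega
    obtain ⟨v, hv⟩ := mkV (fun i => f i + if i = i1 then K - ∑ i, f i else 0) (by
      rw [Finset.sum_add_distrib]; simp; omega)
    obtain ⟨i, hi, hi'⟩ := hdom' v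
    have h1 := hi' (t i) (ht i)
    rw [hv i] at h1
    have h2 : f i = (t i).1 i + 1 := by simp only [f, m, if_neg hi]
    omega
  have hup : ∀ (s : V), Sum.inl s ∈ ρ → ∀ i, (s.1 i : ℕ) ≤ m i + n := by
    intro s hs i
    have h1 : ∑ k ∈ univ.erase i, m k ≤ ∑ k ∈ univ.erase i, (s.1 k : ℕ) :=
      Finset.sum_le_sum fun k _ => hm s hs k
    have h2 := Finset.add_sum_erase univ (fun k => (s.1 k : ℕ)) (mem_univ i)
    have h3 := Finset.add_sum_erase univ m (mem_univ i)
    have h4 := s.2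
    omega
  refine ⟨fun i => s0.1 i, s0.2, ?_⟩
  intro i
  by_cases hi : Sum.inr i ∈ ρ
  · refine ⟨fun i => s0.1 i, s0.2, fun k => ⟨by omega, by omega⟩, Or.inr ?_⟩
    have := hup s0 hs0 i
    simp only [m, if_pos hi] at this
    simpa using this
  · obtain ⟨v, hv, hl⟩ := hcol i hi
    refine ⟨fun i => v.1 i, v.2, fun k => ⟨?_, ?_⟩, Or.inl hl⟩
    · have h1 := hup v hv k
      have h2 := hm s0 hs0 k
      show (v.1 k : ℕ) ≤ s0.1 k + n
      omega
    · have h1 := hup s0 hs0 k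
      have h2 := hm v hv k
      show (s0.1 k : ℕ) ≤ v.1 k + n
      omega

lemma dual_kkm (n : ℕ) (hn : 0 < n) (g : Fin n → (Fin n → ℝ) → ℝ) (hg : ∀ i, Continuous (g i))
    (hcov : ∀ x ∈ stdSimplex ℝ (Fin n), ∃ i, 0 ≤ g i x)
    (hb : ∀ x ∈ stdSimplex ℝ (Fin n), ∀ i, x i = 0 → 0 ≤ g i x) :
    ∃ x ∈ stdSimplex ℝ (Fin n), ∀ i, 0 ≤ g i x := by
  classical
  have step : ∀ K : ℕ, ∃ x ∈ stdSimplex ℝ (Fin n), ∀ i, ∃ y : Fin n → ℝ,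
      (∀ k, |y k - x k| ≤ n / ((K : ℝ) + 1)) ∧ 0 ≤ max (g i y) (n / ((K:ℝ)+1) - y i) := by
    intro K
    have hK : (0:ℝ) < (K:ℝ) + 1 := by positivity
    let sc : (Fin n → ℕ) → (Fin n → ℝ) := fun x i => (x i : ℝ) / ((K:ℝ)+1)
    have hsc : ∀ x : Fin n → ℕ, ∑ i, x i = K + 1 → sc x ∈ stdSimplex ℝ (Fin n) := by
      intro x hx
      refine ⟨fun i => by positivity, ?_⟩
      simp only [sc]
      rw [← Finset.sum_div, ← Nat.cast_sum, hx]
      push_cast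
      exact div_self hK.ne'
    obtain ⟨x, hx, hy⟩ := grid_lemma n hn (K+1)
      (fun x => if h : ∃ i, 0 ≤ g i (sc x) then h.choose else ⟨0, hn⟩)
    refine ⟨sc x, hsc x hx, fun i => ?_⟩
    obtain ⟨y, hys, hyd, hyl⟩ := hy i
    refine ⟨sc y, fun k => ?_, ?_⟩
    · obtain ⟨h1, h2⟩ := hyd k
      have h1' : (y k : ℝ) ≤ x k + n := by exact_mod_cast h1
      have h2' : (x k : ℝ) ≤ y k + n := by exact_mod_cast h2
      simp only [sc]
      rw [← sub_div, abs_div, abs_of_pos hK]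
      gcongr
      rw [abs_le]; constructor <;> linarith
    · rcases hyl with h | h
      · have hex := hcov _ (hsc y hys)
        rw [dif_pos hex] at h
        have := hex.choose_spec
        rw [h] at this
        exact le_max_of_le_left this
      · apply le_max_of_le_right
        simp only [sc]
        rw [← sub_div]
        have : (y i : ℝ) ≤ n := by exact_mod_cast h
        apply div_nonneg <;> linarith
  choose x hx y hy hmax using step
  obtain ⟨a, ha, φ, hφ, hlim⟩ := (isCompact_stdSimplex ℝ (Fin n)).tendsto_subseq hx
  refine ⟨a, ha, fun i => ?_⟩
  have h0 : Filter.Tendsto (fun K : ℕ => (n:ℝ) / ((K:ℝ)+1)) Filter.atTop (nhds 0) := by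
    have := (tendsto_one_div_add_atTop_nhds_zero_nat (𝕜 := ℝ)).const_mul (n:ℝ)
    simpa [div_eq_mul_inv] using this
  have h0φ := h0.comp hφ.tendsto_atTop
  have hyl : Filter.Tendsto (fun K => y (φ K) i) Filter.atTop (nhds a) := by
    rw [tendsto_pi_nhds]
    intro k
    have h1 : Filter.Tendsto (fun K => x (φ K) k) Filter.atTop (nhds (a k)) :=
      ((continuous_apply k).tendsto a).comp hlim
    have h2 : Filter.Tendsto (fun K => y (φ K) i k - x (φ K) k) Filter.atTop (nhds 0) := by
      apply squeeze_zero_norm _ h0φ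
      intro K
      exact hy (φ K) i k
    have := h2.add h1
    simpa using this
  have hlimmax : Filter.Tendsto (fun K => max (g i (y (φ K) i)) (n / ((φ K : ℕ) + 1 : ℝ) - y (φ K) i i))
      Filter.atTop (nhds (max (g i a) (0 - a i))) := by
    apply Filter.Tendsto.max
    · exact ((hg i).tendsto a).comp hyl
    · exact h0φ.sub (((continuous_apply i).tendsto a).comp hyl)
  have hge := ge_of_tendsto' hlimmax (fun K => hmax (φ K) i)
  rcases le_max_iff.mp hge with h | h
  · exact h
  · exact hb a ha i (le_antisymm (by linarith) (ha.1 i))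

theorem kkm (n : ℕ) (hn : 0 < n) (C : Fin n → Set (Fin n → ℝ)) (hC : ∀ i, IsClosed (C i))
    (hcov : ∀ x ∈ stdSimplex ℝ (Fin n), ∃ i, 0 < x i ∧ x ∈ C i) :
    ∃ x ∈ stdSimplex ℝ (Fin n), ∀ i, x ∈ C i := by
  classical
  have hne : ∀ i, (C i).Nonempty := by
    intro i
    obtain ⟨k, hk, hk'⟩ := hcov (Pi.single i 1) (single_mem_stdSimplex ℝ i)
    have : k = i := by
      by_contra h
      rw [Pi.single_eq_of_ne h] at hk
      exact lt_irrefl _ hk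
    exact ⟨_, this ▸ hk'⟩
  let d : Fin n → (Fin n → ℝ) → ℝ := fun i x => Metric.infDist x (C i)
  have hd0 : ∀ i x, 0 ≤ d i x := fun i x => Metric.infDist_nonneg
  have hdc : ∀ i, Continuous (d i) := fun i => Metric.continuous_infDist_pt _
  obtain ⟨x, hx, hg⟩ := dual_kkm n hn (fun i x => d i x - x i * ∑ k, d k x)
    (by intro i; fun_prop) (by
      intro x hx
      by_contra h
      push Not at h
      have h1 : ∑ i, (d i x - x i * ∑ k, d k x) < 0 :=
        Finset.sum_neg (fun i _ => h i) ⟨⟨0, hn⟩, mem_univ _⟩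
      rw [Finset.sum_sub_distrib, ← Finset.sum_mul, hx.2] at h1
      linarith) (by
      intro x hx i hi
      simp only [hi]; linarith [hd0 i x])
  refine ⟨x, hx, ?_⟩
  have hsum : ∑ i, (d i x - x i * ∑ k, d k x) = 0 := by
    rw [Finset.sum_sub_distrib, ← Finset.sum_mul, hx.2]; ring
  have hall := (Finset.sum_eq_zero_iff_of_nonneg (fun i _ => hg i)).mp hsum
  obtain ⟨i, hi, hiC⟩ := hcov x hx
  have h1 := hall i (mem_univ _)
  have h2 : d i x = 0 := Metric.infDist_zero_of_mem hiC
  have h3 : ∑ k, d k x = 0 := by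
    rw [h2] at h1
    have : x i * ∑ k, d k x = 0 := by linarith
    rcases mul_eq_zero.mp this with h | h
    · exact absurd h hi.ne'
    · exact h
  intro k
  have h4 := (Finset.sum_eq_zero_iff_of_nonneg (fun i _ => hd0 i x)).mp h3 k (mem_univ _)
  exact ((hC k).mem_iff_infDist_zero (hne k)).mpr h4

section Rounding
variable {N J : Type*} [Fintype N] [DecidableEq N] [Fintype J] [DecidableEq J]

def spend (p : J → ℝ) (a : J → N) (i : N) : ℝ := ∑ j, if a j = i then p j else 0

lemma spend_update (p : J → ℝ) (a : J → N) (j : J) (k i : N) :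
    spend p (Function.update a j k) i =
      spend p a i - (if a j = i then p j else 0) + (if k = i then p j else 0) := by
  unfold spend
  rw [← Finset.add_sum_erase _ _ (mem_univ j), ← Finset.add_sum_erase _ (fun j => if a j = i then p j else 0) (mem_univ j)]
  have : ∑ x ∈ univ.erase j, (if Function.update a j k x = i then p x else 0)
      = ∑ x ∈ univ.erase j, (if a x = i then p x else 0) := by
    apply Finset.sum_congr rfl
    intro x hx
    rw [Function.update_of_ne (Finset.mem_erase.mp hx).1]
  rw [this, Function.update_self]
  ring

def SatAt (p : J → ℝ) (E : N → J → Prop) (T : ℝ) (a : J → N) (i : N) : Prop :=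
  T ≤ spend p a i ∨ ∃ j, (E i j ∧ a j ≠ i ∧ T ≤ spend p a i + p j) ∨
    (a j = i ∧ T ≤ spend p a i - p j)

lemma rounding (p : J → ℝ) (E : N → J → Prop) (T : ℝ) (hp : ∀ j, p j ≠ 0)
    (a0 : J → N) (ha0 : ∀ j, E (a0 j) j) (hT : ∀ i, spend p a0 i ≤ T)
    (hM : ∀ i, ∃ b : J → N, (∀ j, E (b j) j) ∧ T ≤ spend p b i)
    (hforest : ∀ U : Finset N, U.Nonempty → ∃ i ∈ U, ∀ q q', E i q → E i q' →
      (∃ k ∈ U, k ≠ i ∧ E k q) → (∃ k ∈ U, k ≠ i ∧ E k q') → q = q') :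
    ∃ a : J → N, (∀ j, E (a j) j) ∧ (∀ i, spend p a i ≤ T) ∧ ∀ i, SatAt p E T a i := by
  classical
  suffices H : ∀ (c : ℕ) (U : Finset N), U.card = c →
      ∃ a : J → N, (∀ j, E (a j) j) ∧ (∀ i, spend p a i ≤ T) ∧ ∀ i ∈ U, SatAt p E T a i by
    obtain ⟨a, h1, h2, h3⟩ := H _ univ rfl
    exact ⟨a, h1, h2, fun i => h3 i (mem_univ i)⟩
  intro c
  induction c with
  | zero =>
    intro U hU
    rw [Finset.card_eq_zero] at hU
    subst hU
    exact ⟨a0, ha0, hT, by simp⟩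
  | succ c ih =>
    intro U hU
    obtain ⟨i, hiU, hi⟩ := hforest U (Finset.card_pos.mp (by omega))
    obtain ⟨a, hav, haT, haS⟩ := ih (U.erase i) (by rw [Finset.card_erase_of_mem hiU]; omega)
    let Fr : J → Prop := fun j => ∃ k ∈ U, k ≠ i ∧ E k j
    let F : Finset (J → N) := univ.filter fun a' =>
      (∀ j, E (a' j) j) ∧ (∀ k, spend p a' k ≤ T) ∧
      (∀ j, (Fr j ∨ ¬ E i j) → a' j = a j)
    obtain ⟨a', ha'F, hmax⟩ := Finset.exists_max_image F (fun a' => spend p a' i)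
      ⟨a, by simp only [F, mem_filter, mem_univ, true_and]; exact ⟨hav, haT, fun _ _ => trivial⟩⟩
    simp only [F, mem_filter, mem_univ, true_and] at ha'F hmax
    obtain ⟨hv, hT', hag⟩ := ha'F
    refine ⟨a', hv, hT', ?_⟩
    intro k hk
    by_cases hki : k = i
    · subst hki
      by_contra hns
      unfold SatAt at hns
      push Not at hns
      obtain ⟨hlt, hno⟩ := hns
      -- free items are at their best
      have hfree : ∀ j, E k j → ¬ Fr j → ∀ b : J → N, (∀ j, E (b j) j) →
          (if b j = k then p j else 0) ≤ (if a' j = k then p j else 0) := by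
        intro j hEj hFj b hb
        have hupd : ∀ l, E l j → (∀ k', spend p (Function.update a' j l) k' ≤ T) →
            spend p (Function.update a' j l) k ≤ spend p a' k := by
          intro l hl hs
          apply hmax
          refine ⟨?_, hs, ?_⟩
          · intro j'
            by_cases hj : j' = j
            · subst hj; rw [Function.update_self]; exact hl
            · rw [Function.update_of_ne hj]; exact hv j'
          · intro j' hj'
            have : j' ≠ j := by
              rintro rfl
              rcases hj' with h | h
              · exact hFj h
              · exact h hEj
            rw [Function.update_of_ne this]; exact hag j' hj'
        rcases lt_or_gt_of_ne (hp j) with hneg | hpos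
        · -- chore
          by_cases hak : a' j = k
          · rw [if_pos hak]
            by_cases hbk : b j = k
            · rw [if_pos hbk]
            · exfalso
              have h1 := (hno j).2 hak
              have h2 := hupd (b j) (hb j) (by
                intro k'
                rw [spend_update, hak]
                by_cases h3 : k = k'
                · subst h3
                  rw [if_pos rfl, if_neg hbk]; linarith
                · rw [if_neg h3]
                  have := hT' k'
                  split_ifs <;> linarith)
              rw [spend_update, if_pos hak, if_neg hbk] at h2
              linarith
          · rw [if_neg hak]; split_ifs <;> linarith
        · by_cases hak : a' j = k
          · rw [if_pos hak]; split_ifs <;> linarith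
          · exfalso
            have h1 := (hno j).1 hEj hak
            have h2 := hupd k hEj (by
              intro k'
              rw [spend_update]
              by_cases h3 : k = k'
              · subst h3
                rw [if_pos rfl, if_neg hak]; linarith
              · rw [if_neg h3]
                have := hT' k'
                split_ifs <;> linarith)
            rw [spend_update, if_pos rfl, if_neg hak] at h2
            linarith
      obtain ⟨b, hb, hbT⟩ := hM k
      by_cases hq : ∃ q, E k q ∧ Fr q
      · obtain ⟨q, hq1, hq2⟩ := hq
        have hoth : ∀ j ∈ univ.erase q, (if b j = k then p j else 0) ≤ (if a' j = k then p j else 0) := by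
          intro j hj
          by_cases hEj : E k j
          · apply hfree j hEj _ b hb
            intro hF
            exact (Finset.mem_erase.mp hj).1 (hi j q hEj hq1 hF hq2)
          · rw [if_neg, if_neg]
            · intro h; exact hEj (h ▸ hv j)
            · intro h; exact hEj (h ▸ hb j)
        have hsum := Finset.sum_le_sum hoth
        have e1 := Finset.add_sum_erase univ (fun j => if b j = k then p j else 0) (mem_univ q)
        have e2 := Finset.add_sum_erase univ (fun j => if a' j = k then p j else 0) (mem_univ q)
        have e1' : (if b q = k then p q else 0) + ∑ j ∈ univ.erase q, (if b j = k then p j else 0) = spend p b k := e1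
        have e2' : (if a' q = k then p q else 0) + ∑ j ∈ univ.erase q, (if a' j = k then p j else 0) = spend p a' k := e2
        by_cases h1 : a' q = k
        · have h3 := (hno q).2 h1
          rw [if_pos h1] at e2'
          split_ifs at e1' <;> linarith
        · have h3 := (hno q).1 hq1 h1
          rw [if_neg h1] at e2'
          split_ifs at e1' <;> linarith
      · have : spend p b k ≤ spend p a' k := by
          apply Finset.sum_le_sum
          intro j _
          by_cases hEj : E k j
          · exact hfree j hEj (fun hF => hq ⟨j, hEj, hF⟩) b hb
          · rw [if_neg, if_neg]
            · intro h; exact hEj (h ▸ hv j)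
            · intro h; exact hEj (h ▸ hb j)
        linarith
    · have hagk : ∀ j, E k j → a' j = a j := fun j hj => hag j (Or.inl ⟨k, hk, hki, hj⟩)
      have hiff : ∀ j, a' j = k ↔ a j = k := by
        intro j
        constructor
        · intro h; rw [← hagk j (h ▸ hv j)]; exact h
        · intro h; rw [hagk j (h ▸ hav j)]; exact h
      have hsp : spend p a' k = spend p a k := by
        unfold spend
        apply Finset.sum_congr rfl
        intro j _
        simp only [hiff j]
      have hS := haS k (Finset.mem_erase.mpr ⟨hki, hk⟩)
      unfold SatAt at hS ⊢
      rw [hsp]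
      rcases hS with h | ⟨j, h | h⟩
      · exact Or.inl h
      · exact Or.inr ⟨j, Or.inl ⟨h.1, fun h' => h.2.1 ((hiff j).mp h'), h.2.2⟩⟩
      · exact Or.inr ⟨j, Or.inr ⟨(hiff j).mpr h.1, h.2⟩⟩

lemma forest_of_nocycle (E : N → J → Prop)
    (hnc : ∀ (k : ℕ) (js : Fin (k+2) → J) (ags : Fin (k+2) → N),
      Function.Injective js → Function.Injective ags →
      (∀ l, E (ags l) (js l) ∧ E (ags l) (js (l+1))) → False)
    (U : Finset N) (hU : U.Nonempty) : ∃ i ∈ U, ∀ q q', E i q → E i q' →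
      (∃ k ∈ U, k ≠ i ∧ E k q) → (∃ k ∈ U, k ≠ i ∧ E k q') → q = q' := by
  classical
  by_contra hcon
  push Not at hcon
  have hstep : ∀ s : {x : N × J // x.1 ∈ U ∧ E x.1 x.2}, ∃ t : {x : N × J // x.1 ∈ U ∧ E x.1 x.2},
      t.1.1 ≠ s.1.1 ∧ t.1.2 ≠ s.1.2 ∧ E s.1.1 t.1.2 := by
    rintro ⟨⟨i, j⟩, hi, hij⟩
    obtain ⟨q, q', h1, h2, ⟨k, hk, hk1, hk2⟩, ⟨k', hk', hk1', hk2'⟩, hne⟩ := hcon i hi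
    by_cases hq : q = j
    · refine ⟨⟨⟨k', q'⟩, hk', hk2'⟩, hk1', ?_, h2⟩
      rintro rfl
      exact hne hq
    · exact ⟨⟨⟨k, q⟩, hk, hk2⟩, hk1, hq, h1⟩
  choose nxt hn1 hn2 hn3 using hstep
  obtain ⟨i0, hi0⟩ := hU
  obtain ⟨q0, -, hq0, -⟩ := hcon i0 hi0
  let st : ℕ → {x : N × J // x.1 ∈ U ∧ E x.1 x.2} := fun t => nxt^[t] ⟨⟨i0, q0⟩, hi0, hq0⟩
  have hst : ∀ t, st (t+1) = nxt (st t) := fun t => Function.iterate_succ_apply' _ _ _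
  let A : ℕ → N := fun t => (st t).1.1
  let Q : ℕ → J := fun t => (st t).1.2
  have hA : ∀ t, A (t+1) ≠ A t := fun t => by simp only [A, hst]; exact hn1 _
  have hQ : ∀ t, Q (t+1) ≠ Q t := fun t => by simp only [Q, hst]; exact hn2 _
  have hE : ∀ t, E (A t) (Q t) := fun t => (st t).2.2
  have hE' : ∀ t, E (A t) (Q (t+1)) := fun t => by simp only [A, Q, hst]; exact hn3 _
  -- closing lemma
  have hclose : ∀ s d, 2 ≤ d → (∀ t t', t < t' → t' < t + d → A t ≠ A t' ∧ Q t ≠ Q t') →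
      E (A (s + (d - 1))) (Q s) → False := by
    intro s d hd hmin hlast
    obtain ⟨k, rfl⟩ : ∃ k, d = k + 2 := ⟨d - 2, by omega⟩
    have hdiff : ∀ l l' : Fin (k+2), l ≠ l' → A (s + l) ≠ A (s + l') ∧ Q (s + l) ≠ Q (s + l') := by
      intro l l' h
      rcases lt_or_gt_of_ne h with h | h
      · have h' : (l : ℕ) < l' := h
        have := l'.2
        exact hmin _ _ (by omega) (by omega)
      · have h' : (l' : ℕ) < l := h
        have := l.2
        have := hmin (s + l') (s + l) (by omega) (by omega)
        exact ⟨this.1.symm, this.2.symm⟩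
    refine hnc k (fun l => Q (s + l)) (fun l => A (s + l)) ?_ ?_ ?_
    · intro l l' h
      by_contra hne
      exact (hdiff l l' hne).2 h
    · intro l l' h
      by_contra hne
      exact (hdiff l l' hne).1 h
    · intro l
      refine ⟨hE _, ?_⟩
      by_cases hl : l = Fin.last (k+1)
      · subst hl
        rw [Fin.last_add_one]
        simpa using hlast
      · have : ((l + 1 : Fin (k+2)) : ℕ) = l + 1 := by
          rw [Fin.val_add_one, if_neg hl]
        rw [this]
        exact hE' (s + l)
  have hrep : ∃ d, 0 < d ∧ ∃ s, A s = A (s + d) ∨ Q s = Q (s + d) := by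
    obtain ⟨x, y, hxy, h⟩ := Finite.exists_ne_map_eq_of_infinite A
    rcases lt_or_gt_of_ne hxy with hlt | hlt
    · exact ⟨y - x, by omega, x, Or.inl (by rw [h]; congr 1; omega)⟩
    · exact ⟨x - y, by omega, y, Or.inl (by rw [← h]; congr 1; omega)⟩
  obtain ⟨hd0, s, hs⟩ := Nat.find_spec hrep
  have hmin : ∀ t t', t < t' → t' < t + Nat.find hrep → A t ≠ A t' ∧ Q t ≠ Q t' := by
    intro t t' h1 h2
    have := Nat.find_min hrep (m := t' - t) (by omega)
    push Not at this
    have := this (by omega) t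
    rwa [show t + (t' - t) = t' by omega] at this
  have hd2 : 2 ≤ Nat.find hrep := by
    by_contra h
    have h1 : Nat.find hrep = 1 := by omega
    rw [h1] at hs
    rcases hs with h | h
    · exact hA s h.symm
    · exact hQ s h.symm
  rcases hs with h | h
  · apply hclose (s+1) _ hd2 hmin
    rw [show s + 1 + (Nat.find hrep - 1) = s + Nat.find hrep by omega, ← h]
    exact hE' s
  · apply hclose s _ hd2 hmin
    rw [h]
    have := hE' (s + (Nat.find hrep - 1))
    rwa [show s + (Nat.find hrep - 1) + 1 = s + Nat.find hrep by omega] at this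

end Rounding

lemma face_condition (n m : ℕ) (hn : 0 < n) (hm : 0 < m) (vb : Fin n → Fin (m+1) → ℝ)
    (lam η V : ℝ) (hlam : 0 < lam) (hlast : ∀ i, vb i (Fin.last m) = lam / 2)
    (hV : 0 < V) (hVub : ∀ i j, |vb i j| ≤ V) (hη : η = lam / (2 * m * n * V))
    (w : Fin n → ℝ) (hw : w ∈ stdSimplex ℝ (Fin n)) (a : Fin (m+1) → Fin n)
    (hopt : ∀ j k, (w k + η) * vb k j ≤ (w (a j) + η) * vb (a j) j) (i : Fin n)
    (hi : ∀ k, (∑ j, if a j = k then (w k + η) * vb k j else 0) ≤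
      ∑ j, if a j = i then (w i + η) * vb i j else 0) : 0 < w i := by
  have hn' : (0:ℝ) < n := by exact_mod_cast hn
  have hm' : (0:ℝ) < m := by exact_mod_cast hm
  have hη0 : 0 < η := by rw [hη]; positivity
  by_contra hneg
  have hwi : w i = 0 := le_antisymm (not_lt.mp hneg) (hw.1 i)
  set r := a (Fin.last m) with hr
  have hrmax : ∀ k, w k ≤ w r := by
    intro k
    have h := hopt (Fin.last m) k
    rw [hlast, hlast] at h
    have := le_of_mul_le_mul_right h (by positivity)
    linarith
  have hr1 : 1 / (n:ℝ) ≤ w r := by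
    have h1 : ∑ k, w k ≤ ∑ _k : Fin n, w r := Finset.sum_le_sum fun k _ => hrmax k
    rw [hw.2] at h1
    simp at h1
    rw [div_le_iff₀ hn']; linarith
  have hrpos : 0 < w r := lt_of_lt_of_le (by positivity) hr1
  have hri : r ≠ i := by
    intro h; rw [h, hwi] at hrpos; exact lt_irrefl _ hrpos
  have h := hi r
  rw [Fin.sum_univ_castSucc, Fin.sum_univ_castSucc, if_pos rfl, if_neg hri, hlast] at h
  have hb : ∑ j : Fin m, ((if a j.castSucc = i then (w i + η) * vb i j.castSucc else 0) -
      (if a j.castSucc = r then (w r + η) * vb r j.castSucc else 0)) ≤ ∑ _j : Fin m, η * V := by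
    apply Finset.sum_le_sum
    intro j _
    have hab := abs_le.mp (hVub i j.castSucc)
    have hle : η * vb i j.castSucc ≤ η * V := mul_le_mul_of_nonneg_left hab.2 hη0.le
    have hge : η * (-V) ≤ η * vb i j.castSucc := mul_le_mul_of_nonneg_left hab.1 hη0.le
    have hVn : 0 < η * V := by positivity
    have ho := hopt j.castSucc i
    rw [hwi, zero_add] at *
    by_cases h1 : a j.castSucc = i
    · have h2 : ¬ a j.castSucc = r := fun h2 => hri (h2.symm.trans h1)
      rw [if_pos h1, if_neg h2]; linarith
    · rw [if_neg h1]
      by_cases h2 : a j.castSucc = r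
      · rw [if_pos h2]
        rw [h2] at ho
        linarith
      · rw [if_neg h2]; linarith
  rw [Finset.sum_sub_distrib] at hb
  simp only [Finset.sum_const, Finset.card_univ, Fintype.card_fin, nsmul_eq_mul] at hb
  have he : (m:ℝ) * (η * V) = (1 / n) * (lam / 2) := by
    rw [hη]; field_simp
  have h5 : (1 / (n:ℝ) + η) * (lam / 2) ≤ (w r + η) * (lam / 2) := by
    apply mul_le_mul_of_nonneg_right _ (by positivity)
    linarith
  have h6 : 0 < η * (lam / 2) := by positivity
  rw [add_mul] at h5
  linarith

lemma bval_filter {n m : ℕ} (u : Fin (m+1) → ℝ) (a : Fin (m+1) → Fin n) (i : Fin n) :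
    bval u (univ.filter fun j => a j = i) = ∑ j, if a j = i then u j else 0 := by
  unfold bval
  rw [Finset.sum_filter]

lemma isAlloc_filter {n m : ℕ} (a : Fin (m+1) → Fin n) :
    IsAlloc (fun i => univ.filter fun j => a j = i) := by
  intro j
  exact ⟨a j, by simp, fun y hy => ((Finset.mem_filter.mp hy).2).symm⟩

lemma alloc_exists {n m : ℕ} (B : Fin n → Finset (Fin (m+1))) (hB : IsAlloc B) :
    ∃ b : Fin (m+1) → Fin n, B = fun i => univ.filter fun j => b j = i := by
  choose b hb hu using hB
  refine ⟨b, ?_⟩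
  funext i
  ext j
  simp only [mem_filter, mem_univ, true_and]
  constructor
  · intro h; exact (hu j i h).symm
  · rintro rfl; exact hb j

lemma welfare_filter {n m : ℕ} (W : Fin n → ℝ) (vb : Fin n → Fin (m+1) → ℝ)
    (a : Fin (m+1) → Fin n) :
    ∑ i, W i * bval (vb i) (univ.filter fun j => a j = i) = ∑ j, W (a j) * vb (a j) j := by
  simp only [bval_filter, Finset.mul_sum]
  rw [Finset.sum_comm]
  apply Finset.sum_congr rfl
  intro j _
  rw [Finset.sum_eq_single (a j)]
  · simp
  · intro k _ hk
    rw [if_neg (Ne.symm hk), mul_zero]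
  · simp

/-- for the non-degenerate perturbed instance `Ī` there exist a
weight vector `w*` in the simplex and an allocation maximizing the
`(w*+η)`-weighted welfare that is IEF1 for `Ī`. Simple cycles of length
`k ≥ 2` in the agents-items bipartite graph are encoded by injective maps from
`Fin (k+2)`, whose cyclic addition realises the cyclic successor `ℓ + 1`. -/
theorem stmt16 (n m : ℕ) (hn : 0 < n)
    (v : Fin n → Fin m → ℝ) (vb : Fin n → Fin (m+1) → ℝ)
    (lam ω ε η V : ℝ)
    (htypes : ∀ j : Fin m,
      (∀ i, 0 < v i j) ∨ (∀ i, v i j < 0) ∨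
      ((∀ i, 0 ≤ v i j) ∧ (∃ a, 0 < v a j) ∧ (∃ b, v b j = 0)))
    (hlam : 0 < lam)
    (hgap : ∀ (i : Fin n) (S T : Finset (Fin m)),
      0 < bval (v i) S - bval (v i) T → lam ≤ bval (v i) S - bval (v i) T)
    (hω : 0 < ω)
    (hgapSW : ∀ A B : Fin n → Finset (Fin m), IsAlloc A → IsAlloc B →
      0 < (∑ i, bval (v i) (A i)) - (∑ i, bval (v i) (B i)) →
      ω ≤ (∑ i, bval (v i) (A i)) - (∑ i, bval (v i) (B i)))
    (hε0 : 0 < ε) (hε : ε < min lam (n * ω) / (2 * m))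
    (hlast : ∀ i, vb i (Fin.last m) = lam / 2)
    (hpert : ∀ (i : Fin n) (j : Fin m),
      v i j - ε ≤ vb i j.castSucc ∧ vb i j.castSucc ≤ v i j)
    (hzero : ∀ (i : Fin n) (j : Fin m), vb i j.castSucc = 0 ↔ v i j = 0)
    (hnondeg : ∀ (k : ℕ) (js : Fin (k+2) → Fin (m+1)) (ags : Fin (k+2) → Fin n),
      Function.Injective js → Function.Injective ags →
      (∀ l, vb (ags l) (js l) ≠ 0 ∧ vb (ags l) (js (l+1)) ≠ 0) →
      (∏ l, vb (ags l) (js l) / vb (ags l) (js (l+1))) ≠ 1)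
    (hV : 0 < V) (hVub : ∀ i j, |vb i j| ≤ V) (hVmem : ∃ i j, |vb i j| = V)
    (hη : η = lam / (2 * m * n * V)) :
    ∃ w ∈ stdSimplex ℝ (Fin n), ∃ A : Fin n → Finset (Fin (m+1)), IsAlloc A ∧
      (∀ B : Fin n → Finset (Fin (m+1)), IsAlloc B →
        ∑ i, (w i + η) * bval (vb i) (B i) ≤ ∑ i, (w i + η) * bval (vb i) (A i)) ∧
      IEF1 vb A := by
  classical
  have hm : 0 < m := by
    rcases Nat.eq_zero_or_pos m with h | h
    · subst h
      simp at hε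
      linarith
    · exact h
  have hn' : (0:ℝ) < n := by exact_mod_cast hn
  have hm' : (0:ℝ) < m := by exact_mod_cast hm
  have hη0 : 0 < η := by rw [hη]; positivity
  have hεlam : ε < lam := by
    have h1 : min lam (n * ω) / (2 * m) ≤ lam / (2 * m) := by
      gcongr
      exact min_le_left _ _
    have h2 : lam / (2 * m) ≤ lam := by
      apply div_le_self hlam.le
      have : (1:ℝ) ≤ m := by exact_mod_cast hm
      linarith
    linarith
  have hposv : ∀ i j, 0 < v i j → 0 < vb i j.castSucc := by
    intro i j h
    have h1 := hgap i {j} ∅ (by simpa [bval] using h)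
    simp [bval] at h1
    linarith [(hpert i j).1]
  -- the KKM cover
  let C : Fin n → Set (Fin n → ℝ) := fun i => ⋃ a : Fin (m+1) → Fin n,
    {w | (∀ j k, (w k + η) * vb k j ≤ (w (a j) + η) * vb (a j) j) ∧
      ∀ k, (∑ j, if a j = k then (w k + η) * vb k j else 0) ≤
      ∑ j, if a j = i then (w i + η) * vb i j else 0}
  have hCc : ∀ i, IsClosed (C i) := by
    intro i
    apply isClosed_iUnion_of_finite
    intro a
    have hcont : ∀ k, Continuous fun w : Fin n → ℝ =>
        (∑ j, if a j = k then (w k + η) * vb k j else 0) := by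
      intro k
      apply continuous_finsetSum
      intro j _
      split_ifs <;> fun_prop
    have h1 : IsClosed {w : Fin n → ℝ | ∀ j k, (w k + η) * vb k j ≤ (w (a j) + η) * vb (a j) j} := by
      simp only [Set.ofPred_forall]
      refine isClosed_iInter fun j => isClosed_iInter fun k => isClosed_le ?_ ?_ <;> fun_prop
    have h2 : IsClosed {w : Fin n → ℝ | ∀ k, (∑ j, if a j = k then (w k + η) * vb k j else 0) ≤
        ∑ j, if a j = i then (w i + η) * vb i j else 0} := by
      simp only [Set.ofPred_forall]
      exact isClosed_iInter fun k => isClosed_le (hcont k) (hcont i)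
    exact h1.inter h2
  obtain ⟨w, hw, hwC⟩ := kkm n hn C hCc (by
    intro w hw
    have hex : ∀ j, ∃ k : Fin n, ∀ l, (w l + η) * vb l j ≤ (w k + η) * vb k j := by
      intro j
      obtain ⟨k, -, hk⟩ := Finset.exists_max_image (univ : Finset (Fin n))
        (fun k => (w k + η) * vb k j) ⟨⟨0, hn⟩, mem_univ _⟩
      exact ⟨k, fun l => hk l (mem_univ l)⟩
    choose a ha using hex
    obtain ⟨i, -, hi⟩ := Finset.exists_max_image (univ : Finset (Fin n))
      (fun k => ∑ j, if a j = k then (w k + η) * vb k j else 0) ⟨⟨0, hn⟩, mem_univ _⟩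
    have hi' := fun k => hi k (mem_univ k)
    exact ⟨i, face_condition n m hn hm vb lam η V hlam hlast hV hVub hη w hw a ha i hi',
      Set.mem_iUnion.mpr ⟨a, ha, hi'⟩⟩)
  have hWpos : ∀ i, 0 < w i + η := fun i => by linarith [hw.1 i]
  have hwC' : ∀ i, ∃ a : Fin (m+1) → Fin n,
    (∀ j k, (w k + η) * vb k j ≤ (w (a j) + η) * vb (a j) j) ∧
      ∀ k, (∑ j, if a j = k then (w k + η) * vb k j else 0) ≤
      ∑ j, if a j = i then (w i + η) * vb i j else 0 := fun i => Set.mem_iUnion.mp (hwC i)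
  choose a hopt hmax using hwC'
  obtain ⟨i0, -, hi0⟩ := Finset.exists_min_image (univ : Finset (Fin n))
    (fun i => ∑ j, if a i j = i then (w i + η) * vb i j else 0) ⟨⟨0, hn⟩, mem_univ _⟩
  let p : Fin (m+1) → ℝ := fun j => (w (a i0 j) + η) * vb (a i0 j) j
  have hpmax : ∀ j k, (w k + η) * vb k j ≤ p j := fun j k => hopt i0 j k
  let E : Fin n → Fin (m+1) → Prop := fun i j => (w i + η) * vb i j = p j
  have hE : ∀ i j, E (a i j) j := fun i j => le_antisymm (hpmax j _) (hopt i j _)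
  have hspend : ∀ b : Fin (m+1) → Fin n, (∀ j, E (b j) j) → ∀ k,
      (∑ j, if b j = k then (w k + η) * vb k j else 0) = spend p b k := by
    intro b hb k
    apply Finset.sum_congr rfl
    intro j _
    split_ifs with h
    · rw [← h]; exact hb j
    · rfl
  have hp : ∀ j, p j ≠ 0 := by
    intro j
    refine Fin.lastCases ?_ (fun j => ?_) j
    · have := hpmax (Fin.last m) ⟨0, hn⟩
      rw [hlast] at this
      have h2 := mul_pos (hWpos ⟨0, hn⟩) (half_pos hlam)
      exact (lt_of_lt_of_le h2 this).ne'
    · have hpos : ∀ k, 0 < v k j → p j.castSucc ≠ 0 := by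
        intro k hk
        exact (lt_of_lt_of_le (mul_pos (hWpos k) (hposv k j hk)) (hpmax _ k)).ne'
      rcases htypes j with h | h | ⟨-, ⟨k, hk⟩, -⟩
      · exact hpos _ (h ⟨0, hn⟩)
      · have h1 := (hpert (a i0 j.castSucc) j).2
        have h2 := h (a i0 j.castSucc)
        exact (mul_neg_of_pos_of_neg (hWpos _) (by linarith)).ne
      · exact hpos k hk
  have hvne : ∀ i j, E i j → vb i j ≠ 0 := by
    intro i j h h0
    apply hp j
    rw [← h, h0, mul_zero]
  have hforest := forest_of_nocycle E (by
    intro k js ags hj ha hEl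
    apply hnondeg k js ags hj ha
    · intro l; exact ⟨hvne _ _ (hEl l).1, hvne _ _ (hEl l).2⟩
    · have h1 : ∀ l, vb (ags l) (js l) / vb (ags l) (js (l+1)) = p (js l) / p (js (l+1)) := by
        intro l
        rw [← (hEl l).1, ← (hEl l).2, mul_div_mul_left _ _ (hWpos _).ne']
      rw [Finset.prod_congr rfl fun l _ => h1 l, Finset.prod_div_distrib]
      have h2 := Equiv.prod_comp (Equiv.addRight (1 : Fin (k+2))) (fun l => p (js l))
      simp only [Equiv.coe_addRight] at h2
      rw [h2]
      exact div_self (Finset.prod_ne_zero_iff.mpr fun l _ => hp _))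
  let T := spend p (a i0) i0
  obtain ⟨b, hbE, hbT, hbS⟩ := rounding p E T hp (a i0) (hE i0)
    (by
      intro k
      have := hmax i0 k
      rwa [hspend _ (hE i0), hspend _ (hE i0)] at this)
    (by
      intro i
      refine ⟨a i, hE i, ?_⟩
      have := hi0 i (mem_univ i)
      rwa [hspend _ (hE i0), hspend _ (hE i)] at this)
    hforest
  refine ⟨w, hw, fun i => univ.filter fun j => b j = i, isAlloc_filter b, ?_, ?_⟩
  · intro B hB
    obtain ⟨b', rfl⟩ := alloc_exists B hB
    rw [welfare_filter (fun i => w i + η), welfare_filter (fun i => w i + η)]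
    apply Finset.sum_le_sum
    intro j _
    rw [show (w (b j) + η) * vb (b j) j = p j from hbE j]
    exact hpmax j _
  · intro i
    have hown : (w i + η) * bval (vb i) (univ.filter fun j => b j = i) = spend p b i := by
      rw [bval_filter, Finset.mul_sum, ← hspend b hbE]
      apply Finset.sum_congr rfl
      intro j _
      split_ifs <;> simp
    have hle : ∀ k, (w i + η) * bval (vb i) (univ.filter fun j => b j = k) ≤ T := by
      intro k
      refine le_trans ?_ (hbT k)
      rw [bval_filter, Finset.mul_sum]
      apply Finset.sum_le_sum
      intro j _
      split_ifs
      · exact hpmax j i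
      · simp
    have hfin : ∀ S : Finset (Fin (m+1)),
        T ≤ (w i + η) * bval (vb i) (symmDiff (univ.filter fun j => b j = i) S) →
        ∀ k, bval (vb i) (univ.filter fun j => b j = k) ≤
          bval (vb i) (symmDiff (univ.filter fun j => b j = i) S) := by
      intro S hS k
      exact le_of_mul_le_mul_left ((hle k).trans hS) (hWpos i)
    rcases hbS i with h | ⟨j, ⟨hEj, hj, h⟩ | ⟨hj, h⟩⟩
    · refine ⟨∅, by simp, hfin ∅ ?_⟩
      rw [← Finset.bot_eq_empty, symmDiff_bot, hown]; exact h
    · refine ⟨{j}, by simp, hfin {j} ?_⟩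
      have : symmDiff (univ.filter fun j => b j = i) {j} = insert j (univ.filter fun j => b j = i) := by
        ext x
        simp only [Finset.mem_symmDiff, mem_filter, mem_univ, true_and, mem_singleton, mem_insert]
        by_cases hx : x = j
        · subst hx; simp [hj]
        · simp [hx]
      rw [this]
      have h2 : bval (vb i) (insert j (univ.filter fun j => b j = i)) =
          vb i j + bval (vb i) (univ.filter fun j => b j = i) := by
        unfold bval
        rw [Finset.sum_insert (by simpa using hj)]
      rw [h2, mul_add, hown, show (w i + η) * vb i j = p j from hEj]
      linarith
    · refine ⟨{j}, by simp, hfin {j} ?_⟩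
      have hjm : j ∈ univ.filter fun j => b j = i := by simpa using hj
      have : symmDiff (univ.filter fun j => b j = i) {j} = (univ.filter fun j => b j = i).erase j := by
        ext x
        simp only [Finset.mem_symmDiff, mem_filter, mem_univ, true_and, mem_singleton, mem_erase]
        by_cases hx : x = j
        · subst hx; simp [hj]
        · simp [hx]
      rw [this]
      have h2 : vb i j + bval (vb i) ((univ.filter fun j => b j = i).erase j) =
          bval (vb i) (univ.filter fun j => b j = i) := by
        unfold bval
        rw [Finset.add_sum_erase _ _ hjm]
      have h3 : (w i + η) * vb i j = p j := by
        have := hbE j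
        rw [hj] at this
        exact this
      rw [← h2, mul_add, h3] at hown
      linarith
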